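/- If b_k = (-1)^k · a_0 for all k, then for every m ≥ 1 the subdiagonal entry of the zero-sum triangle satisfies t(2m, 2m-1) = (2m-1)·a_0 - a_1. -/

import Mathlib

/-!
Consecutive subdiagonal entries satisfy `s (n + 1) = -(s n + d n)`, where `d n` is the diagonal
entry next to `s n` in its row. Multiplying by `(-1) ^ (n + 1)` makes the recurrence telescope, so
`(-1) ^ n * s n` is `s 0` plus an alternating sum of diagonal entries. When the diagonal itself
alternates, all summands of that sum are equal.
-/

section AddCommGroup

variable {G : Type*} [AddCommGroup G]

theorem neg_one_pow_smul_eq_add_alternating_sum {s d : ℕ → G}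
    (hs : ∀ n, s (n + 1) = -(s n + d n)) (n : ℕ) :
    (-1 : ℤ) ^ n • s n = s 0 + ∑ k ∈ Finset.range n, (-1 : ℤ) ^ k • d k := by
  have telescoping_step (k : ℕ) :
      (-1 : ℤ) ^ (k + 1) • s (k + 1) - (-1 : ℤ) ^ k • s k = (-1 : ℤ) ^ k • d k := by
    rw [hs, pow_succ]
    module
  simp only [← telescoping_step, Finset.sum_range_sub (fun k ↦ (-1 : ℤ) ^ k • s k), pow_zero,
    one_smul, add_sub_cancel]

theorem zero_sum_triangle_subdiagonal_general {t : ℕ → ℕ → G} {c : G}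
    (hzero : ∀ n, t (n + 2) (n + 1) = -(t (n + 1) n + t (n + 1) (n + 1)))
    (hdiag : ∀ n, t (n + 1) (n + 1) = (-1 : ℤ) ^ (n + 1) • c) (n : ℕ) :
    t (n + 1) n = (-1 : ℤ) ^ n • (t 1 0 - n • c) := by
  have diagonal_summand (k : ℕ) : (-1 : ℤ) ^ k • t (k + 1) (k + 1) = -c := by
    rw [hdiag, smul_smul, ← pow_add, Odd.neg_one_pow ⟨k, by ring⟩, neg_one_smul]
  have signed_subdiagonal : (-1 : ℤ) ^ n • t (n + 1) n = t 1 0 - n • c := by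
    simpa [diagonal_summand, sub_eq_add_neg] using
      neg_one_pow_smul_eq_add_alternating_sum (s := fun k ↦ t (k + 1) k) hzero n
  rw [← signed_subdiagonal, smul_smul, ← pow_add, Even.neg_one_pow ⟨n, rfl⟩, one_smul]

end AddCommGroup

theorem zero_sum_triangle_subdiagonal
    (a b : ℕ → ℤ) (t : ℕ → ℕ → ℤ)
    (hab : a 0 = b 0)
    (hleft : ∀ i, t i 0 = a i)
    (hdiag : ∀ i, t i i = b i)
    (hzero : ∀ i j, 0 < j → j < i → t i j = -(t (i-1) (j-1) + t (i-1) j))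
    (hb : ∀ k, b k = (-1)^k * a 0)
    (m : ℕ) (hm : 1 ≤ m) :
    t (2*m) (2*m - 1) = (2*(m : ℤ) - 1) * a 0 - a 1 := by
  have h := zero_sum_triangle_subdiagonal_general (fun n ↦ hzero (n + 2) (n + 1) (by lia) (by lia))
    (fun n ↦ (hdiag (n + 1)).trans (hb (n + 1))) (2 * m - 1)
  rw [Nat.sub_add_cancel (by lia), Odd.neg_one_pow ⟨m - 1, by lia⟩, hleft] at h
  simpa [Nat.cast_sub (show 1 ≤ 2 * m by lia)] using h
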